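/- Let λ^n: λ^n_1 ≥ … ≥ λ^n_n be a non-increasing sequence of real numbers and let μ = (μ_1, …, μ_n) ∈ ℝ^n be such that λ^n majorizes μ. Let λ^{n−1} be the unique non-increasing real sequence of length n−1 such that: (1) λ^{n−1} interlaces λ^n; (2) Σλ^{n−1} = μ_1 + … + μ_{n−1}; and (3) λ^{n−1} majorizes κ^{n−1} whenever κ^n is a non-increasing real sequence with λ^n ⪰ κ^n, κ^n weakly interlaces κ^{n−1} ∈ ℝ^{n−1}, and Σκ^{n−1} = μ_1 + … + μ_{n−1}. Then λ^{n−1} majorizes (μ_1, …, μ_{n−1}). -/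

import Mathlib

/-!
Condition `h4` is applied to the pair `(lam, mu)` itself. This requires that `lam` weakly
interlaces `(mu 1, …, mu (n-1))`, which follows from `lam` majorizing `mu`: the upper bounds are
majorization together with the fact that the `k` largest entries of a non-increasing sequence are
its first `k` (`NonIncr.sum_le_sum_Icc`), and the lower bound on `S` is the upper bound on the
complement of `S` in `{1, …, n}`, because the total sums agree.
-/

open Finset

/-- `x` is non-increasing on the indices `1, …, n`. -/
def NonIncr (n : ℕ) (x : ℕ → ℝ) : Prop :=
  ∀ i, 1 ≤ i → i + 1 ≤ n → x (i + 1) ≤ x i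

/-- `x` (viewed as a sequence indexed by `1, …, n`) majorizes `y`:
for every `k ≤ n` the sum of the `k` largest entries of `x` is at least the sum of the `k`
largest entries of `y` (expressed here by saying that every `k`-element partial sum of `y`
is dominated by some `k`-element partial sum of `x`), and the total sums agree. -/
def Maj (n : ℕ) (x y : ℕ → ℝ) : Prop :=
  (∀ B : Finset ℕ, B ⊆ Finset.Icc 1 n →
    ∃ A : Finset ℕ, A ⊆ Finset.Icc 1 n ∧ A.card = B.card ∧
      ∑ i ∈ B, y i ≤ ∑ i ∈ A, x i) ∧
  ∑ i ∈ Finset.Icc 1 n, x i = ∑ i ∈ Finset.Icc 1 n, y i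

/-- The sequence `lam` of length `n` and the sequence `mu` of length `n - 1` interlace:
`lam i ≥ mu i ≥ lam (i+1)` for `1 ≤ i ≤ n - 1`. -/
def Interlaces (n : ℕ) (lam mu : ℕ → ℝ) : Prop :=
  ∀ i, 1 ≤ i → i + 1 ≤ n → mu i ≤ lam i ∧ lam (i + 1) ≤ mu i

/-- A Gelfand–Tsetlin pattern of size `n`: `L j i` is the `i`-th entry (`1 ≤ i ≤ j`) of
row `j` (`1 ≤ j ≤ n`); each row is non-increasing and row `j` interlaces row `j + 1`. -/
def IsGTPattern (n : ℕ) (L : ℕ → ℕ → ℝ) : Prop :=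
  (∀ j, 1 ≤ j → j ≤ n → NonIncr j (L j)) ∧
  (∀ j, 1 ≤ j → j + 1 ≤ n → Interlaces (j + 1) (L (j + 1)) (L j))

/-- Sum of the entries of row `j` of a pattern. -/
def rowSum (L : ℕ → ℕ → ℝ) (j : ℕ) : ℝ := ∑ i ∈ Finset.Icc 1 j, L j i

/-- The pattern `L` (of size `n`) has weight `mu`. -/
def HasWeight (n : ℕ) (L : ℕ → ℕ → ℝ) (mu : ℕ → ℝ) : Prop :=
  ∀ j, 1 ≤ j → j ≤ n → rowSum L j - rowSum L (j - 1) = mu j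

/-- The pattern `L` (of size `n`) has bounding sequence `lam`. -/
def HasBounding (n : ℕ) (L : ℕ → ℕ → ℝ) (lam : ℕ → ℝ) : Prop :=
  ∀ i, 1 ≤ i → i ≤ n → L n i = lam i

/-- `lam` (length `n`) weakly interlaces `mu` (length `n - 1`): for every nonempty subset
`S` of `{1, …, n-1}` of cardinality `j`, `lam 1 + ⋯ + lam j ≥ ∑_{i ∈ S} mu i ≥
lam (n-j+1) + ⋯ + lam n`. -/
def WeaklyInterlaces (n : ℕ) (lam mu : ℕ → ℝ) : Prop :=
  ∀ S : Finset ℕ, S ⊆ Finset.Icc 1 (n - 1) → S.Nonempty →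
    ∑ i ∈ S, mu i ≤ ∑ i ∈ Finset.Icc 1 S.card, lam i ∧
    ∑ i ∈ Finset.Icc (n - S.card + 1) n, lam i ≤ ∑ i ∈ S, mu i

/-- Triangular area of an interlacing pair (`lam` of length `n`, `mu` of length `n-1`). -/
def triArea (n : ℕ) (lam mu : ℕ → ℝ) : ℝ :=
  ∑ i ∈ Finset.Icc 1 (n - 1), (lam i - mu i) * (mu i - lam (i + 1))

/-- Trapezoidal area of an interlacing pair (`lam` of length `n`, `mu` of length `n-1`). -/
def trapArea (n : ℕ) (lam mu : ℕ → ℝ) : ℝ :=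
  ∑ i ∈ Finset.Icc 1 (n - 1), ∑ j ∈ Finset.Icc i (n - 1),
    (lam i - mu i) * (mu j - lam (j + 1))

/-- Triangular area of a pattern of size `n`. -/
def patTriArea (n : ℕ) (L : ℕ → ℕ → ℝ) : ℝ :=
  ∑ j ∈ Finset.Icc 1 (n - 1), triArea (j + 1) (L (j + 1)) (L j)

/-- Trapezoidal area of a pattern of size `n`. -/
def patTrapArea (n : ℕ) (L : ℕ → ℕ → ℝ) : ℝ :=
  ∑ j ∈ Finset.Icc 1 (n - 1), trapArea (j + 1) (L (j + 1)) (L j)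

/-- `‖x‖²` for a sequence indexed by `1, …, n`. -/
def normSq (n : ℕ) (x : ℕ → ℝ) : ℝ := ∑ i ∈ Finset.Icc 1 n, (x i) ^ 2

/-- All entries `x 1, …, x n` are integers. -/
def IsIntegralSeq (n : ℕ) (x : ℕ → ℝ) : Prop :=
  ∀ i, 1 ≤ i → i ≤ n → ∃ z : ℤ, x i = (z : ℝ)

theorem NonIncr.le_of_le {n : ℕ} {x : ℕ → ℝ} (h : NonIncr n x) {i j : ℕ} (hi : 1 ≤ i)
    (hij : i ≤ j) (hj : j ≤ n) : x j ≤ x i := by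
  induction j, hij using Nat.le_induction with
  | base => exact le_rfl
  | succ j hij ih => exact (h j (by omega) hj).trans (ih (by omega))

theorem NonIncr.sum_le_sum_Icc {n : ℕ} {x : ℕ → ℝ} (h : NonIncr n x) {A : Finset ℕ}
    (hA : A ⊆ Finset.Icc 1 n) : ∑ i ∈ A, x i ≤ ∑ i ∈ Finset.Icc 1 A.card, x i := by
  induction n generalizing A with
  | zero =>
    have : A = ∅ := by simpa using hA
    simp [this]
  | succ n ih =>
    have h' : NonIncr n x := fun i hi hin => h i hi (by omega)
    by_cases hn : n + 1 ∈ A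
    · have hsub : A.erase (n + 1) ⊆ Finset.Icc 1 n := by
        intro i hi
        have h₁ := Finset.mem_erase.1 hi
        have h₂ := Finset.mem_Icc.1 (hA h₁.2)
        exact Finset.mem_Icc.2 (by omega)
      have hcard := Finset.card_erase_add_one hn
      have hle : A.card ≤ n + 1 := by simpa using Finset.card_le_card hA
      have hrec := ih h' hsub
      rw [← Finset.sum_erase_add _ _ hn, ← hcard, Finset.sum_Icc_succ_top (by omega)]
      exact add_le_add hrec (h.le_of_le (by omega) (by omega) le_rfl)
    · refine ih h' fun i hi => ?_
      have h₂ := Finset.mem_Icc.1 (hA hi)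
      have h₃ : i ≠ n + 1 := fun h => hn (h ▸ hi)
      exact Finset.mem_Icc.2 (by omega)

theorem Maj.sum_le_sum_Icc {n : ℕ} {x y : ℕ → ℝ} (hx : NonIncr n x) (hxy : Maj n x y)
    {B : Finset ℕ} (hB : B ⊆ Finset.Icc 1 n) :
    ∑ i ∈ B, y i ≤ ∑ i ∈ Finset.Icc 1 B.card, x i := by
  obtain ⟨A, hA, hAB, hle⟩ := hxy.1 B hB
  exact hle.trans (hAB ▸ hx.sum_le_sum_Icc hA)

theorem Maj.weaklyInterlaces {n : ℕ} {x y : ℕ → ℝ} (hx : NonIncr n x) (hxy : Maj n x y) :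
    WeaklyInterlaces n x y := by
  intro S hS _
  have hS' : S ⊆ Finset.Icc 1 n := hS.trans (Finset.Icc_subset_Icc_right (Nat.sub_le n 1))
  refine ⟨hxy.sum_le_sum_Icc hx hS', ?_⟩
  have hcompl := hxy.sum_le_sum_Icc hx (Finset.sdiff_subset (s := Finset.Icc 1 n) (t := S))
  have hcard : (Finset.Icc 1 n \ S).card = n - S.card := by
    rw [Finset.card_sdiff_of_subset hS', Nat.card_Icc, Nat.add_sub_cancel]
  rw [hcard] at hcompl
  have hy := Finset.sum_sdiff (f := y) hS'
  have hsplit : ∑ i ∈ Finset.Icc 1 (n - S.card), x i +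
      ∑ i ∈ Finset.Icc (n - S.card + 1) n, x i = ∑ i ∈ Finset.Icc 1 n, x i := by
    rw [← Finset.sum_union (Finset.disjoint_left.2 fun i hi hi' => by
      have := Finset.mem_Icc.1 hi
      have := Finset.mem_Icc.1 hi'
      omega)]
    congr 1
    ext i
    simp only [Finset.mem_union, Finset.mem_Icc]
    omega
  have htotal := hxy.2
  linarith

/-- The distinguished row `λ^{n-1}` majorizes `(μ_1, …, μ_{n-1})`. -/
theorem stmt11 (n : ℕ) (lam mu lam' : ℕ → ℝ)
    (hlam : NonIncr n lam) (hmaj : Maj n lam mu)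
    (h1 : NonIncr (n - 1) lam') (h2 : Interlaces n lam lam')
    (h3 : ∑ i ∈ Finset.Icc 1 (n - 1), lam' i = ∑ i ∈ Finset.Icc 1 (n - 1), mu i)
    (h4 : ∀ kap kap' : ℕ → ℝ, NonIncr n kap → Maj n lam kap →
      WeaklyInterlaces n kap kap' →
      (∑ i ∈ Finset.Icc 1 (n - 1), kap' i = ∑ i ∈ Finset.Icc 1 (n - 1), mu i) →
      Maj (n - 1) lam' kap') :
    Maj (n - 1) lam' mu := by
  exact h4 lam mu hlam ⟨fun B hB => ⟨B, hB, rfl, le_rfl⟩, rfl⟩ (hmaj.weaklyInterlaces hlam) rfl
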